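/- With the Fock-module operators e_j, f_j defined below and with u = 0, the operator [e_1, f_0] = e_1∘f_0 − f_0∘e_1 on F is the zero operator. -/

import Mathlib

noncomputable section

/-- A partition: a weakly decreasing function `ℕ → ℕ` (0-indexed rows) that takes the
value `0` somewhere (hence eventually). -/
def IsPtn (f : ℕ → ℕ) : Prop := Antitone f ∧ ∃ N, f N = 0

/-- The type of partitions. -/
abbrev Ptn : Type := {f : ℕ → ℕ // IsPtn f}

/-- The Fock space: the free `ℂ`-vector space with basis indexed by all partitions. -/
abbrev FockSp : Type := Ptn →₀ ℂ

namespace Fock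

/-- The number of nonzero parts of a partition (the first 0-indexed row equal to zero). -/
def plen (lam : Ptn) : ℕ := Nat.find lam.2.2

/-- `|λ| = Σ_i λ_i`. -/
def psize (lam : Ptn) : ℕ := ∑ i ∈ Finset.range (plen lam), lam.1 i

/-- A box may be added in (0-indexed) row `i`, i.e. `λ + 1_i` is again a partition. -/
def Addable (lam : Ptn) (i : ℕ) : Prop := ∀ p, p < i → lam.1 i < lam.1 p

instance (lam : Ptn) (i : ℕ) : Decidable (Addable lam i) :=
  inferInstanceAs (Decidable (∀ p, p < i → lam.1 i < lam.1 p))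

/-- A box may be removed from (0-indexed) row `i`, i.e. `λ − 1_i` is again a partition. -/
def Removable (lam : Ptn) (i : ℕ) : Prop := lam.1 (i + 1) < lam.1 i

instance (lam : Ptn) (i : ℕ) : Decidable (Removable lam i) :=
  inferInstanceAs (Decidable (lam.1 (i + 1) < lam.1 i))

/-- The partition `λ + 1_i`. -/
def addBox (lam : Ptn) (i : ℕ) (h : Addable lam i) : Ptn :=
  ⟨Function.update lam.1 i (lam.1 i + 1), by
    constructor
    · intro a b hab
      rw [Function.update_apply, Function.update_apply]
      split_ifs with hb ha ha
      · exact le_rfl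
      · have : a < i := lt_of_le_of_ne (hb ▸ hab) ha
        exact h a this
      · have : lam.1 b ≤ lam.1 i := lam.2.1 (ha ▸ hab)
        omega
      · exact lam.2.1 hab
    · obtain ⟨N, hN⟩ := lam.2.2
      refine ⟨max N (i + 1), ?_⟩
      rw [Function.update_apply, if_neg (by omega : ¬ max N (i + 1) = i)]
      have := lam.2.1 (le_max_left N (i + 1))
      omega⟩

/-- The partition `λ − 1_i`. -/
def remBox (lam : Ptn) (i : ℕ) (h : Removable lam i) : Ptn :=
  ⟨Function.update lam.1 i (lam.1 i - 1), by
    constructor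
    · intro a b hab
      rw [Function.update_apply, Function.update_apply]
      split_ifs with hb ha ha
      · exact le_rfl
      · have : lam.1 i ≤ lam.1 a := lam.2.1 (le_of_lt (lt_of_le_of_ne (hb ▸ hab) ha))
        omega
      · have h1 : lam.1 b ≤ lam.1 (i + 1) := lam.2.1 (by omega : i + 1 ≤ b)
        have h2 : lam.1 (i + 1) < lam.1 i := h
        omega
      · exact lam.2.1 hab
    · obtain ⟨N, hN⟩ := lam.2.2
      refine ⟨max N (i + 1), ?_⟩
      rw [Function.update_apply, if_neg (by omega : ¬ max N (i + 1) = i)]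
      have := lam.2.1 (le_max_left N (i + 1))
      omega⟩

variable (h1 h2 u : ℂ)

/-- The coefficient of `|λ + 1_i⟩` in `e_j |λ⟩` (0-indexed row `i`). -/
def ecoef (j : ℕ) (lam : Ptn) (i : ℕ) : ℂ :=
  (1 / h1) *
  (∏ p ∈ Finset.range i,
    (((((lam.1 i : ℂ) - (lam.1 p : ℂ)) * h1 + (((i : ℂ) - (p : ℂ)) - 1) * h2)
        * (((lam.1 i : ℂ) - (lam.1 p : ℂ) + 1) * h1 + (((i : ℂ) - (p : ℂ)) + 1) * h2))
      / ((((lam.1 i : ℂ) - (lam.1 p : ℂ)) * h1 + ((i : ℂ) - (p : ℂ)) * h2)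
        * (((lam.1 i : ℂ) - (lam.1 p : ℂ) + 1) * h1 + ((i : ℂ) - (p : ℂ)) * h2)))) *
  ((lam.1 i : ℂ) * h1 + (i : ℂ) * h2 + u) ^ j

/-- The coefficient of `|λ − 1_i⟩` in `f_j |λ⟩` (0-indexed row `i`). -/
def fcoef (j : ℕ) (lam : Ptn) (i : ℕ) : ℂ :=
  (-(1 / h1)) *
  ((((lam.1 (i+1) : ℂ) - (lam.1 i : ℂ)) * h1)
      / ((((lam.1 (i+1) : ℂ) - (lam.1 i : ℂ)) + 1) * h1 + h2)) *
  (∏ p ∈ Finset.Icc (i + 1) (plen lam),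
    (((((lam.1 p : ℂ) - (lam.1 i : ℂ) + 1) * h1 + (((p : ℂ) - (i : ℂ)) + 1) * h2)
        * (((lam.1 (p+1) : ℂ) - (lam.1 i : ℂ)) * h1 + ((p : ℂ) - (i : ℂ)) * h2))
      / ((((lam.1 (p+1) : ℂ) - (lam.1 i : ℂ) + 1) * h1 + (((p : ℂ) - (i : ℂ)) + 1) * h2)
        * (((lam.1 p : ℂ) - (lam.1 i : ℂ)) * h1 + ((p : ℂ) - (i : ℂ)) * h2)))) *
  (((lam.1 i : ℂ) - 1) * h1 + (i : ℂ) * h2 + u) ^ j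

/-- `e_j |λ⟩`, a finite sum over the rows where a box can be added (all of which lie in
`{0, …, plen λ}`). -/
def evec (j : ℕ) (lam : Ptn) : FockSp :=
  ∑ i ∈ Finset.range (plen lam + 1),
    if h : Addable lam i then Finsupp.single (addBox lam i h) (ecoef h1 h2 u j lam i) else 0

/-- `f_j |λ⟩`, a finite sum over the rows where a box can be removed (all of which lie in
`{0, …, plen λ − 1}`). -/
def fvec (j : ℕ) (lam : Ptn) : FockSp :=
  ∑ i ∈ Finset.range (plen lam),
    if h : Removable lam i then Finsupp.single (remBox lam i h) (fcoef h1 h2 u j lam i) else 0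

/-- The Fock-module operator `e_j`. -/
def eOp (j : ℕ) : Module.End ℂ FockSp :=
  Finsupp.lsum ℂ fun lam => LinearMap.toSpanSingleton ℂ FockSp (evec h1 h2 u j lam)

/-- The Fock-module operator `f_j`. -/
def fOp (j : ℕ) : Module.End ℂ FockSp :=
  Finsupp.lsum ℂ fun lam => LinearMap.toSpanSingleton ℂ FockSp (fvec h1 h2 u j lam)

/-- `ψ_k := [e_k, f_0]`. -/
def psiOp (k : ℕ) : Module.End ℂ FockSp :=
  eOp h1 h2 u k * fOp h1 h2 u 0 - fOp h1 h2 u 0 * eOp h1 h2 u k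

end Fock


open Fock

/-!
Put `x i = λ_i h1 + i h2`. Up to the power of `x i + u`, the coefficients of `e_j` and `f_0` are
products of values of a single rational function at differences `x i - x p`. Adding a box in one
row and removing one from another row commute term by term, so `[e_j, f_0]` is diagonal. Its
eigenvalue on `|λ⟩` is a weighted sum of the residues of `R(z) = ∏ p ≤ N, rowFactor (z - x p)`,
whose poles are the `x p` and the `x p - h1`. For `j = 1` the weight is a rational function with a
single finite pole, at `y = x (N + 1)`, so the residue theorem expresses the eigenvalue through
`R(y)` and the expansion of `R` at infinity. Since rows `N` and `N + 1` are both empty, `R(y) = 0`,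
and what remains is a multiple of `u`.
-/

namespace Fock

lemma prod_add_single_of_mem {ι M N : Type*} [DecidableEq ι] [AddZeroClass M] [CommMonoid N]
    {s : Finset ι} {k : ι} (hk : k ∈ s) (g : M → N) (x : ι → M) (c : M) :
    ∏ p ∈ s, g ((x + Pi.single k c : ι → M) p) = g (x k + c) * ∏ p ∈ s.erase k, g (x p) := by
  rw [← Finset.mul_prod_erase s _ hk, Pi.add_apply, Pi.single_eq_same]
  congr 1
  refine Finset.prod_congr rfl fun p hp => ?_
  rw [Pi.add_apply, Pi.single_eq_of_ne (Finset.ne_of_mem_erase hp), add_zero]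

lemma prod_add_single_of_notMem {ι M N : Type*} [DecidableEq ι] [AddZeroClass M] [CommMonoid N]
    {s : Finset ι} {k : ι} (hk : k ∉ s) (g : M → N) (x : ι → M) (c : M) :
    ∏ p ∈ s, g ((x + Pi.single k c : ι → M) p) = ∏ p ∈ s, g (x p) := by
  refine Finset.prod_congr rfl fun p hp => ?_
  rw [Pi.add_apply, Pi.single_eq_of_ne (ne_of_mem_of_not_mem hp hk), add_zero]

lemma prod_range_erase {M : Type*} [CommMonoid M] (g : ℕ → M) {N k : ℕ} (hk : k ≤ N) :
    ∏ p ∈ (Finset.range (N + 1)).erase k, g p =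
      (∏ p ∈ Finset.range k, g p) * ∏ p ∈ Finset.Icc (k + 1) N, g p := by
  rw [← Finset.prod_union]
  · congr 1
    ext p
    simp only [Finset.mem_erase, Finset.mem_range, Finset.mem_union, Finset.mem_Icc]
    omega
  · rw [Finset.disjoint_left]
    intro p
    simp only [Finset.mem_range, Finset.mem_Icc]
    omega

section Residues

open Polynomial Lagrange

lemma natDegree_prod_sub_C_sub_prod_le_and_coeff {R ι : Type*} [CommRing R] {d : ℕ} (hd : 0 < d)
    (c : R) {q : ι → R[X]} {s : Finset ι} (hs : s.Nonempty) (hq : ∀ i ∈ s, (q i).Monic)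
    (hqd : ∀ i ∈ s, (q i).natDegree = d) :
    (∏ i ∈ s, (q i - C c) - ∏ i ∈ s, q i).natDegree ≤ d * (s.card - 1) ∧
      (∏ i ∈ s, (q i - C c) - ∏ i ∈ s, q i).coeff (d * (s.card - 1)) = -(s.card * c) := by
  induction hs using Finset.Nonempty.cons_induction with
  | singleton i => simp
  | cons i s hi hs ih =>
    simp only [Finset.forall_mem_cons] at hq hqd
    obtain ⟨hdeg, hcoeff⟩ := ih hq.2 hqd.2
    have hcard : d + d * (s.card - 1) = d * s.card := by
      rw [add_comm, ← Nat.mul_add_one, Nat.sub_add_cancel hs.card_pos]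
    have hmonic (j) (hj : j ∈ s) : (q j - C c).Monic ∧ (q j - C c).natDegree = d := by
      refine ⟨(hq.2 j hj).sub_of_left (degree_C_le.trans_lt ?_), by simp [hqd.2 j hj]⟩
      exact natDegree_pos_iff_degree_pos.1 (hqd.2 j hj ▸ hd)
    have hP : (∏ j ∈ s, (q j - C c)).natDegree = d * s.card := by
      rw [natDegree_prod_of_monic _ _ fun j hj => (hmonic j hj).1,
        Finset.sum_congr rfl fun j hj => (hmonic j hj).2, Finset.sum_const, smul_eq_mul, mul_comm]
    have hPlead : (∏ j ∈ s, (q j - C c)).coeff (d * s.card) = 1 := by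
      rw [← hP]
      exact monic_prod_of_monic _ _ fun j hj => (hmonic j hj).1
    have hlead : (q i).coeff d = 1 := hqd.1 ▸ hq.1
    have hrec : ∏ j ∈ s.cons i hi, (q j - C c) - ∏ j ∈ s.cons i hi, q j =
        q i * (∏ j ∈ s, (q j - C c) - ∏ j ∈ s, q j) - C c * ∏ j ∈ s, (q j - C c) := by
      rw [Finset.prod_cons, Finset.prod_cons]
      ring
    rw [hrec, Finset.card_cons, Nat.add_sub_cancel]
    constructor
    · refine (natDegree_sub_le _ _).trans (max_le ?_ ((natDegree_C_mul_le _ _).trans hP.le))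
      exact hcard ▸ natDegree_mul_le_of_le hqd.1.le hdeg
    · rw [coeff_sub, coeff_C_mul, hPlead, ← hcard, coeff_mul_add_eq_of_natDegree_le hqd.1.le hdeg,
        hlead, hcoeff]
      push_cast
      ring

variable {F ι : Type*} [Field F] (a b : F) (s : Finset ι) (x : ι → F)

/-- The factor by which a row at relative position `t` contributes to the coefficients of both
`e_j` and `f_j`, with `a`, `b` in the role of `h1`, `h2`. -/
def rowFactor (t : F) : F := (t - b) * (t + a + b) / (t * (t + a))

/-- The factor of the first row beyond the truncation in the coefficients of `f_j`; it accounts for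
all the empty rows from there on. -/
def tailFactor (t : F) : F := (t - b) / (t + a)

variable {a b} in
@[simp]
lemma rowFactor_self : rowFactor a b b = 0 := by simp [rowFactor]

variable {a b} in
@[simp]
lemma tailFactor_self : tailFactor a b b = 0 := by simp [tailFactor]

lemma rowFactor_sub_comm (z w : F) : rowFactor a b (z - a - w) = rowFactor a b (w - z) := by
  unfold rowFactor
  congr 1 <;> ring

lemma rowFactor_eq_mul_tailFactor (t : F) :
    rowFactor a b t = (t + a + b) / t * tailFactor a b t := by
  rw [rowFactor, tailFactor, div_mul_div_comm, mul_comm (t - b)]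

lemma prod_rowFactor (z : F) :
    ∏ p ∈ s, rowFactor a b (z - x p) =
      (∏ p ∈ s, (z - x p - b) * (z - x p + a + b)) /
        ((∏ p ∈ s, (z - x p)) * ∏ p ∈ s, (z - (x p - a))) := by
  rw [← Finset.prod_mul_distrib, ← Finset.prod_div_distrib]
  refine Finset.prod_congr rfl fun p _ => ?_
  rw [rowFactor, sub_add]

/-- The poles of `z ↦ ∏ p, rowFactor a b (z - x p)`. -/
def pole : ι ⊕ ι → F := Sum.elim x fun k => x k - a

/-- The residues of `z ↦ ∏ p ∈ s, rowFactor a b (z - x p)` at its poles, valid when these are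
distinct. -/
def residue [DecidableEq ι] : ι ⊕ ι → F :=
  Sum.elim (fun k => -(b * (a + b) / a) * ∏ p ∈ s.erase k, rowFactor a b (x k - x p))
    fun k => b * (a + b) / a * ∏ p ∈ s.erase k, rowFactor a b (x k - a - x p)

/-- The numerator of `z ↦ ∏ p ∈ s, rowFactor a b (z - x p) - 1` over the monic denominator
`nodal (s.disjSum s) (pole a x)`. The numerator `(z - x p - b) * (z - x p + a + b)` of each factor
differs from its denominator by a constant only, and is written here in terms of that constant. -/
def properNumerator : F[X] :=
  ∏ p ∈ s, ((X - C (x p)) * (X - C (x p - a)) - C (b * (a + b))) -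
    nodal (s.disjSum s) (pole a x)

lemma eval_properNumerator (z : F) :
    (properNumerator a b s x).eval z = ∏ p ∈ s, (z - x p - b) * (z - x p + a + b) -
      (nodal (s.disjSum s) (pole a x)).eval z := by
  rw [properNumerator, eval_sub, eval_prod]
  congr 1
  refine Finset.prod_congr rfl fun p _ => ?_
  simp only [eval_sub, eval_mul, eval_X, eval_C]
  ring

lemma nodal_pole :
    nodal (s.disjSum s) (pole a x) = ∏ p ∈ s, (X - C (x p)) * (X - C (x p - a)) := by
  rw [nodal, Finset.prod_disjSum, Finset.prod_mul_distrib]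
  rfl

lemma card_disjSum_self : (s.disjSum s).card = 2 * s.card := by
  rw [Finset.card_disjSum, two_mul]

variable {s} in
lemma natDegree_properNumerator_le_and_coeff (hs : s.Nonempty) :
    (properNumerator a b s x).natDegree ≤ 2 * (s.card - 1) ∧
      (properNumerator a b s x).coeff (2 * (s.card - 1)) = -(s.card * (b * (a + b))) := by
  rw [properNumerator, nodal_pole]
  refine natDegree_prod_sub_C_sub_prod_le_and_coeff two_pos (b * (a + b)) hs
    (fun p _ => (monic_X_sub_C (x p)).mul (monic_X_sub_C (x p - a))) fun p _ => ?_
  rw [natDegree_mul (X_sub_C_ne_zero _) (X_sub_C_ne_zero _), natDegree_X_sub_C, natDegree_X_sub_C,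
    one_add_one_eq_two]

lemma degree_X_mul_properNumerator_lt :
    (X * properNumerator a b s x).degree < ((s.disjSum s).card : WithBot ℕ) := by
  rcases s.eq_empty_or_nonempty with rfl | hs
  · simp [properNumerator]
  have hdeg := natDegree_mul_le_of_le natDegree_X_le
    (natDegree_properNumerator_le_and_coeff a b x hs).1
  refine degree_le_natDegree.trans_lt (Nat.cast_lt.2 (hdeg.trans_lt ?_))
  have := hs.card_pos
  rw [card_disjSum_self]
  omega

lemma degree_properNumerator_lt :
    (properNumerator a b s x).degree < ((s.disjSum s).card : WithBot ℕ) := by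
  refine lt_of_le_of_lt ?_ (degree_X_mul_properNumerator_lt a b s x)
  rw [mul_comm]
  exact degree_le_mul_left _ X_ne_zero

lemma coeff_X_mul_properNumerator :
    (X * properNumerator a b s x).coeff
      ((s.disjSum s).card - 1) = -(s.card * (b * (a + b))) := by
  rcases s.eq_empty_or_nonempty with rfl | hs
  · simp [properNumerator]
  have hcard : (s.disjSum s).card - 1 = 2 * (s.card - 1) + 1 := by
    have := hs.card_pos
    rw [card_disjSum_self]
    omega
  rw [hcard, coeff_X_mul, (natDegree_properNumerator_le_and_coeff a b x hs).2]

variable [DecidableEq ι] {s x}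

lemma residue_eq_eval_div {n : ι ⊕ ι} (hn : n ∈ s.disjSum s) :
    residue a b s x n =
      (properNumerator a b s x).eval (pole a x n) /
        ∏ m ∈ (s.disjSum s).erase n, (pole a x n - pole a x m) := by
  rw [eval_properNumerator, eval_nodal_at_node hn, sub_zero]
  rcases n with k | k
  · have hk : k ∈ s := Finset.inl_mem_disjSum.1 hn
    have herase : (s.disjSum s).erase (Sum.inl k) = (s.erase k).disjSum s := by
      ext (p | p) <;> simp
    simp only [herase, Finset.prod_disjSum, residue, pole, Sum.elim_inl, Sum.elim_inr,
      prod_rowFactor, ← Finset.mul_prod_erase s _ hk]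
    rw [neg_mul, div_mul_div_comm, ← neg_div]
    congr 1 <;> ring
  · have hk : k ∈ s := Finset.inr_mem_disjSum.1 hn
    have herase : (s.disjSum s).erase (Sum.inr k) = s.disjSum (s.erase k) := by
      ext (p | p) <;> simp
    simp only [herase, Finset.prod_disjSum, residue, pole, Sum.elim_inl, Sum.elim_inr,
      prod_rowFactor, ← Finset.mul_prod_erase s _ hk]
    rw [div_mul_div_comm, ← neg_div_neg_eq]
    congr 1 <;> ring

variable {a}

lemma sum_residue_eq_zero (hinj : Set.InjOn (pole a x) (s.disjSum s)) :
    ∑ n ∈ s.disjSum s, residue a b s x n = 0 := by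
  rw [Finset.sum_congr rfl fun n hn => residue_eq_eval_div a b hn,
    ← coeff_eq_sum hinj (degree_properNumerator_lt a b s x), ← coeff_X_mul]
  exact coeff_eq_zero_of_degree_lt ((degree_X_mul_properNumerator_lt a b s x).trans_le
    (Nat.cast_le.2 le_tsub_add))

lemma sum_residue_mul_pole (hinj : Set.InjOn (pole a x) (s.disjSum s)) :
    ∑ n ∈ s.disjSum s, residue a b s x n * pole a x n = -(s.card * (b * (a + b))) := by
  rw [← coeff_X_mul_properNumerator a b s x,
    coeff_eq_sum hinj (degree_X_mul_properNumerator_lt a b s x)]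
  refine Finset.sum_congr rfl fun n hn => ?_
  rw [residue_eq_eval_div a b hn, eval_mul, eval_X, div_mul_eq_mul_div, mul_comm]

lemma prod_rowFactor_eq_one_add_sum_residue_div (hinj : Set.InjOn (pole a x) (s.disjSum s))
    {y : F} (hy : ∀ n ∈ s.disjSum s, y ≠ pole a x n) :
    ∏ p ∈ s, rowFactor a b (y - x p) =
      1 + ∑ n ∈ s.disjSum s, residue a b s x n / (y - pole a x n) := by
  have hnodal : (nodal (s.disjSum s) (pole a x)).eval y ≠ 0 := eval_nodal_not_at_node hy
  have hinterp : (properNumerator a b s x).eval y =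
      (nodal (s.disjSum s) (pole a x)).eval y *
        ∑ n ∈ s.disjSum s, residue a b s x n / (y - pole a x n) := by
    nth_rw 1 [eq_interpolate hinj (degree_properNumerator_lt a b s x),
      eval_interpolate_not_at_node _ hy]
    congr 1
    refine Finset.sum_congr rfl fun n hn => ?_
    rw [residue_eq_eval_div a b hn, nodalWeight, Finset.prod_inv_distrib]
    ring
  have hprod : ∏ p ∈ s, rowFactor a b (y - x p) =
      ((properNumerator a b s x).eval y + (nodal (s.disjSum s) (pole a x)).eval y) /
        (nodal (s.disjSum s) (pole a x)).eval y := by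
    rw [prod_rowFactor, eval_properNumerator, sub_add_cancel, eval_nodal, Finset.prod_disjSum]
    rfl
  rw [hprod, hinterp, add_div, div_self hnodal, mul_div_cancel_left₀ _ hnodal, add_comm]

lemma sum_residue_mul_tailFactor (hinj : Set.InjOn (pole a x) (s.disjSum s))
    {y : F} (hy : ∀ n ∈ s.disjSum s, y ≠ pole a x n) (u : F) :
    ∑ n ∈ s.disjSum s, residue a b s x n *
        ((pole a x n + u) * tailFactor a b (y - a - pole a x n)) =
      (a + b) * ((y + u) * (1 - ∏ p ∈ s, rowFactor a b (y - x p)) - s.card * b) := by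
  have hsplit (n) (hn : n ∈ s.disjSum s) : residue a b s x n *
        ((pole a x n + u) * tailFactor a b (y - a - pole a x n)) =
      residue a b s x n * pole a x n + (u + a + b) * residue a b s x n -
        (a + b) * (y + u) * (residue a b s x n / (y - pole a x n)) := by
    have hyn : y - pole a x n ≠ 0 := sub_ne_zero.2 (hy n hn)
    rw [tailFactor, show y - a - pole a x n + a = y - pole a x n by ring]
    field_simp
    ring
  rw [Finset.sum_congr rfl hsplit, Finset.sum_sub_distrib, Finset.sum_add_distrib,
    ← Finset.mul_sum, ← Finset.mul_sum, sum_residue_eq_zero b hinj, sum_residue_mul_pole b hinj,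
    prod_rowFactor_eq_one_add_sum_residue_div b hinj hy]
  ring

end Residues

section Coefficients

variable {F : Type*} [Field F] (a b u : F)

/-- The coefficient of `|λ + 1_i⟩` in `e_j |λ⟩`, as a function of the row positions
`x p = λ_p * a + p * b`. -/
def addCoef (j : ℕ) (x : ℕ → F) (i : ℕ) : F :=
  1 / a * (∏ p ∈ Finset.range i, rowFactor a b (x i - x p)) * (x i + u) ^ j

/-- The coefficient of `|λ - 1_i⟩` in `f_0 |λ⟩`, as a function of the row positions
`x p = λ_p * a + p * b`, for a partition `λ` whose rows beyond `N` are
empty. -/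
def remCoef (N : ℕ) (x : ℕ → F) (i : ℕ) : F :=
  -(1 / a) * tailFactor a b (x (N + 1) - x i) *
    ∏ p ∈ Finset.Icc (i + 1) N, rowFactor a b (x p - x i)

lemma tailFactor_mul_prod (x : ℕ → F) {i M : ℕ} (hiM : i ≤ M) :
    tailFactor a b (x (i + 1) - x i) * ∏ p ∈ Finset.Icc (i + 1) M,
        ((x p - x i + a + b) / (x p - x i) * tailFactor a b (x (p + 1) - x i)) =
      tailFactor a b (x (M + 1) - x i) *
        ∏ p ∈ Finset.Icc (i + 1) M, rowFactor a b (x p - x i) := by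
  induction M, hiM using Nat.le_induction with
  | base => simp
  | succ M hM ih =>
    rw [Finset.prod_Icc_succ_top (by omega), Finset.prod_Icc_succ_top (by omega), ← mul_assoc, ih,
      rowFactor_eq_mul_tailFactor a b (x (M + 1) - x i)]
    ring

lemma remCoef_mul_addCoef_comm (j : ℕ) {N i k : ℕ} (hi : i ≤ N) (hik : i ≠ k) (x : ℕ → F) :
    remCoef a b N x k * addCoef a b u j (x + Pi.single k (-a)) i =
      addCoef a b u j x i * remCoef a b N (x + Pi.single i a) k := by
  have hxi : (x + Pi.single k (-a) : ℕ → F) i = x i := by simp [hik]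
  have hxk : (x + Pi.single i a : ℕ → F) k = x k := by simp [hik.symm]
  have hxN : (x + Pi.single i a : ℕ → F) (N + 1) = x (N + 1) := by simp [show N + 1 ≠ i by omega]
  simp only [remCoef, addCoef, hxi, hxk, hxN]
  rcases hik.lt_or_gt with hlt | hgt
  · rw [prod_add_single_of_notMem (by simp [hlt.le]) (fun t => rowFactor a b (x i - t)),
      prod_add_single_of_notMem (by simp; omega) (fun t => rowFactor a b (t - x k))]
    ring
  · have hmem : i ∈ Finset.Icc (k + 1) N := Finset.mem_Icc.2 ⟨hgt, hi⟩
    rw [prod_add_single_of_mem (Finset.mem_range.2 hgt) (fun t => rowFactor a b (x i - t)),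
      prod_add_single_of_mem hmem (fun t => rowFactor a b (t - x k)),
      ← Finset.mul_prod_erase _ _ hmem, ← Finset.mul_prod_erase _ _ (Finset.mem_range.2 hgt),
      show x i - (x k + -a) = x i + a - x k by ring]
    ring

lemma remCoef_mul_addCoef_self (j : ℕ) {N k : ℕ} (hk : k ≤ N) (x : ℕ → F) :
    remCoef a b N x k * addCoef a b u j (x + Pi.single k (-a)) k =
      -(1 / a ^ 2) * (∏ p ∈ (Finset.range (N + 1)).erase k, rowFactor a b (x k - a - x p)) *
        ((x k - a + u) ^ j * tailFactor a b (x (N + 1) - x k)) := by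
  rw [remCoef, addCoef, prod_range_erase _ hk,
    prod_add_single_of_notMem Finset.notMem_range_self (fun t => rowFactor a b (_ - t))]
  simp only [Pi.add_apply, Pi.single_eq_same, ← sub_eq_add_neg, rowFactor_sub_comm]
  ring

lemma addCoef_mul_remCoef_self (j : ℕ) {N k : ℕ} (hk : k ≤ N) (x : ℕ → F) :
    addCoef a b u j x k * remCoef a b N (x + Pi.single k a) k =
      -(1 / a ^ 2) * (∏ p ∈ (Finset.range (N + 1)).erase k, rowFactor a b (x k - x p)) *
        ((x k + u) ^ j * tailFactor a b (x (N + 1) - a - x k)) := by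
  have hxN : (x + Pi.single k a : ℕ → F) (N + 1) = x (N + 1) := by simp [show N + 1 ≠ k by omega]
  rw [remCoef, addCoef, prod_range_erase _ hk, hxN,
    prod_add_single_of_notMem (by simp) (fun t => rowFactor a b (t - _))]
  simp only [Pi.add_apply, Pi.single_eq_same, add_comm _ a, ← sub_sub, rowFactor_sub_comm]
  ring

variable {a b}

lemma sum_remCoef_mul_addCoef_sub_eq_sum_residue (hb : b ≠ 0) (hab : a + b ≠ 0) (j N : ℕ)
    (x : ℕ → F) :
    ∑ k ∈ Finset.range (N + 1),
        (remCoef a b N x k * addCoef a b u j (x + Pi.single k (-a)) k -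
          addCoef a b u j x k * remCoef a b N (x + Pi.single k a) k) =
      -(1 / (a * b * (a + b))) *
        ∑ n ∈ (Finset.range (N + 1)).disjSum (Finset.range (N + 1)),
          residue a b (Finset.range (N + 1)) x n *
            ((pole a x n + u) ^ j * tailFactor a b (x (N + 1) - a - pole a x n)) := by
  rw [Finset.sum_disjSum, ← Finset.sum_add_distrib, Finset.mul_sum]
  refine Finset.sum_congr rfl fun k hk => ?_
  have hkN : k ≤ N := Nat.lt_succ_iff.1 (Finset.mem_range.1 hk)
  rw [remCoef_mul_addCoef_self a b u j hkN, addCoef_mul_remCoef_self a b u j hkN]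
  simp only [residue, pole, Sum.elim_inl, Sum.elim_inr]
  rw [show x (N + 1) - a - (x k - a) = x (N + 1) - x k by ring]
  field_simp
  ring

lemma sum_remCoef_mul_addCoef_one_sub (hb : b ≠ 0) (hab : a + b ≠ 0) {N : ℕ} {x : ℕ → F}
    (hinj : Function.Injective (pole a x)) (hx : x (N + 1) = x N + b) :
    ∑ k ∈ Finset.range (N + 1),
        (remCoef a b N x k * addCoef a b u 1 (x + Pi.single k (-a)) k -
          addCoef a b u 1 x k * remCoef a b N (x + Pi.single k a) k) =
      -((x (N + 1) + u - (N + 1) * b) / (a * b)) := by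
  have hy (n) (hn : n ∈ (Finset.range (N + 1)).disjSum (Finset.range (N + 1))) :
      x (N + 1) ≠ pole a x n := by
    refine fun h => ?_
    rw [← hinj (a₁ := Sum.inl (N + 1)) h] at hn
    simp at hn
  have hprod : ∏ p ∈ Finset.range (N + 1), rowFactor a b (x (N + 1) - x p) = 0 :=
    Finset.prod_eq_zero (Finset.self_mem_range_succ N) (by rw [hx, add_sub_cancel_left,
      rowFactor_self])
  rw [sum_remCoef_mul_addCoef_sub_eq_sum_residue u hb hab]
  simp only [pow_one]
  rw [sum_residue_mul_tailFactor b hinj.injOn hy, hprod, Finset.card_range]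
  push_cast
  field_simp
  ring

end Coefficients

section FockSpace

/-- The position of the end of row `i`, from which all coefficients of `e_j |λ⟩` and `f_j |λ⟩` are
computed. -/
def rowPos (h1 h2 : ℂ) (lam : Ptn) (i : ℕ) : ℂ := lam.1 i * h1 + i * h2

/-- The Fock space mapped to the free vector space on all sequences of row positions, where boxes
can be added and removed without restriction. -/
def posMap (h1 h2 : ℂ) : FockSp →ₗ[ℂ] ((ℕ → ℂ) →₀ ℂ) := Finsupp.lmapDomain ℂ ℂ (rowPos h1 h2)

variable {h1 h2 : ℂ} (u : ℂ) (lam : Ptn)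

lemma rowPos_injective (hh1 : h1 ≠ 0) : Function.Injective (rowPos h1 h2) := by
  refine fun lam mu h => Subtype.ext (funext fun i => ?_)
  simpa [rowPos, hh1] using congrFun h i

variable {lam} in
lemma rowPos_addBox {i : ℕ} (h : Addable lam i) :
    rowPos h1 h2 (addBox lam i h) = rowPos h1 h2 lam + Pi.single i h1 := by
  funext p
  rcases eq_or_ne p i with rfl | hp
  · simp only [rowPos, addBox, Function.update_self, Pi.add_apply, Pi.single_eq_same]
    push_cast
    ring
  · simp [rowPos, addBox, hp]

variable {lam} in
lemma rowPos_remBox {i : ℕ} (h : Removable lam i) :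
    rowPos h1 h2 (remBox lam i h) = rowPos h1 h2 lam + Pi.single i (-h1) := by
  funext p
  rcases eq_or_ne p i with rfl | hp
  · have hpos : 1 ≤ lam.1 p := Nat.one_le_of_lt h
    simp only [rowPos, remBox, Function.update_self, Pi.add_apply, Pi.single_eq_same]
    push_cast [hpos]
    ring
  · simp [rowPos, remBox, hp]

lemma rowPos_succ_of_eq {i : ℕ} (h : lam.1 (i + 1) = lam.1 i) :
    rowPos h1 h2 lam (i + 1) = rowPos h1 h2 lam i + h2 := by
  rw [rowPos, rowPos, h]
  push_cast
  ring

lemma pole_rowPos_injective (hgen : LinearIndependent ℤ ![h1, h2]) :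
    Function.Injective (pole h1 (rowPos h1 h2 lam)) := by
  have hpair {m n m' n' : ℤ} (h : (m : ℂ) * h1 + n * h2 = m' * h1 + n' * h2) :
      m = m' ∧ n = n' := by
    have := LinearIndependent.pair_iff.1 hgen (m - m') (n - n') (by
      simp only [zsmul_eq_mul]
      push_cast
      linear_combination h)
    omega
  have hinl (i : ℕ) : pole h1 (rowPos h1 h2 lam) (Sum.inl i) =
      ((lam.1 i : ℤ) : ℂ) * h1 + ((i : ℤ) : ℂ) * h2 := by simp [pole, rowPos]
  have hinr (i : ℕ) : pole h1 (rowPos h1 h2 lam) (Sum.inr i) =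
      ((lam.1 i - 1 : ℤ) : ℂ) * h1 + ((i : ℤ) : ℂ) * h2 := by
    simp only [pole, rowPos, Sum.elim_inr]
    push_cast
    ring
  rintro (i | i) (k | k) h <;> simp only [hinl, hinr] at h <;>
    obtain ⟨hrow, hik⟩ := hpair h <;> obtain rfl := Int.ofNat_inj.1 hik
  · rfl
  · omega
  · omega
  · rfl

variable {lam}

lemma apply_eq_zero_of_plen_le {p : ℕ} (h : plen lam ≤ p) : lam.1 p = 0 :=
  Nat.le_zero.1 ((lam.2.1 h).trans (Nat.find_spec lam.2.2).le)

lemma plen_le_of_apply_eq_zero {p : ℕ} (h : lam.1 p = 0) : plen lam ≤ p :=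
  Nat.find_min' lam.2.2 h

lemma Addable.le_plen {i : ℕ} (h : Addable lam i) : i ≤ plen lam := by
  by_contra! hlt
  exact Nat.not_lt_zero _ (apply_eq_zero_of_plen_le le_rfl ▸ h (plen lam) hlt)

lemma Removable.lt_plen {i : ℕ} (h : Removable lam i) : i < plen lam := by
  by_contra! hle
  have hlt : lam.1 (i + 1) < lam.1 i := h
  exact Nat.not_lt_zero _ (apply_eq_zero_of_plen_le hle ▸ hlt)

lemma plen_addBox_le {i : ℕ} (h : Addable lam i) : plen (addBox lam i h) ≤ plen lam + 1 := by
  apply plen_le_of_apply_eq_zero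
  simp [addBox, (Nat.lt_succ_of_le h.le_plen).ne', apply_eq_zero_of_plen_le (Nat.le_succ _)]

lemma plen_remBox_le {i : ℕ} (h : Removable lam i) : plen (remBox lam i h) ≤ plen lam := by
  apply plen_le_of_apply_eq_zero
  simp [remBox, h.lt_plen.ne', apply_eq_zero_of_plen_le le_rfl]

lemma rowPos_succ_of_plen_le {p : ℕ} (h : plen lam ≤ p) :
    rowPos h1 h2 lam (p + 1) = rowPos h1 h2 lam p + h2 :=
  rowPos_succ_of_eq lam (by
    rw [apply_eq_zero_of_plen_le h, apply_eq_zero_of_plen_le (h.trans (Nat.le_succ p))])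

lemma ecoef_eq_addCoef (j i : ℕ) :
    ecoef h1 h2 u j lam i = addCoef h1 h2 u j (rowPos h1 h2 lam) i := by
  rw [ecoef, addCoef]
  congr 2
  refine Finset.prod_congr rfl fun p _ => ?_
  rw [rowFactor, rowPos, rowPos]
  congr 1 <;> ring

lemma addCoef_eq_zero_of_not_addable (j : ℕ) {i : ℕ} (h : ¬ Addable lam i) :
    addCoef h1 h2 u j (rowPos h1 h2 lam) i = 0 := by
  simp only [Addable, not_forall, not_lt] at h
  obtain ⟨p, hp, hle⟩ := h
  obtain ⟨m, rfl⟩ : ∃ m, i = m + 1 := ⟨i - 1, by omega⟩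
  have hrow : lam.1 (m + 1) = lam.1 m :=
    le_antisymm (lam.2.1 (Nat.le_succ m)) ((lam.2.1 (Nat.le_of_lt_succ hp)).trans hle)
  rw [addCoef, Finset.prod_eq_zero (Finset.self_mem_range_succ m), mul_zero, zero_mul]
  rw [rowPos_succ_of_eq lam hrow, add_sub_cancel_left, rowFactor_self]

lemma remCoef_eq_zero_of_not_removable {N i : ℕ} (hi : i ≤ N) (h : ¬ Removable lam i) :
    remCoef h1 h2 N (rowPos h1 h2 lam) i = 0 := by
  have hrow := rowPos_succ_of_eq (h1 := h1) (h2 := h2) lam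
    (le_antisymm (lam.2.1 (Nat.le_succ i)) (not_lt.1 h))
  rcases hi.eq_or_lt with rfl | hlt
  · rw [remCoef, hrow, add_sub_cancel_left, tailFactor_self, mul_zero, zero_mul]
  · rw [remCoef, Finset.prod_eq_zero (Finset.mem_Icc.2 ⟨le_rfl, hlt⟩), mul_zero]
    rw [hrow, add_sub_cancel_left, rowFactor_self]

lemma fcoef_zero_eq_prod_tailFactor (i : ℕ) :
    fcoef h1 h2 u 0 lam i =
      -(1 / h1) * (tailFactor h1 h2 (rowPos h1 h2 lam (i + 1) - rowPos h1 h2 lam i) *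
        ∏ p ∈ Finset.Icc (i + 1) (plen lam),
          ((rowPos h1 h2 lam p - rowPos h1 h2 lam i + h1 + h2) /
              (rowPos h1 h2 lam p - rowPos h1 h2 lam i) *
            tailFactor h1 h2 (rowPos h1 h2 lam (p + 1) - rowPos h1 h2 lam i))) := by
  rw [fcoef, pow_zero, mul_one, mul_assoc]
  congr 2
  · simp only [tailFactor, rowPos]
    push_cast
    congr 1 <;> ring
  · refine Finset.prod_congr rfl fun p _ => ?_
    rw [tailFactor, div_mul_div_comm]
    simp only [rowPos]
    push_cast
    congr 1 <;> ring

lemma div_mul_tailFactor_eq_one_of_plen_le (hgen : LinearIndependent ℤ ![h1, h2]) {i p : ℕ}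
    (hi : i < p) (hp : plen lam ≤ p) :
    (rowPos h1 h2 lam p - rowPos h1 h2 lam i + h1 + h2) /
        (rowPos h1 h2 lam p - rowPos h1 h2 lam i) *
      tailFactor h1 h2 (rowPos h1 h2 lam (p + 1) - rowPos h1 h2 lam i) = 1 := by
  have hinj := pole_rowPos_injective lam hgen
  have hnum : rowPos h1 h2 lam p - rowPos h1 h2 lam i ≠ 0 :=
    sub_ne_zero.2 (hinj.ne (a₁ := Sum.inl p) (a₂ := Sum.inl i) (by simpa using hi.ne'))
  have hden : rowPos h1 h2 lam (p + 1) - (rowPos h1 h2 lam i - h1) ≠ 0 :=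
    sub_ne_zero.2 (hinj.ne (a₁ := Sum.inl (p + 1)) (a₂ := Sum.inr i) Sum.inl_ne_inr)
  rw [← sub_add] at hden
  rw [tailFactor, div_mul_div_comm, div_eq_one_iff_eq (mul_ne_zero hnum hden),
    rowPos_succ_of_plen_le hp]
  ring

lemma fcoef_zero_eq_remCoef (hgen : LinearIndependent ℤ ![h1, h2]) {N i : ℕ}
    (hN : plen lam ≤ N) (h : Removable lam i) :
    fcoef h1 h2 u 0 lam i = remCoef h1 h2 N (rowPos h1 h2 lam) i := by
  rw [fcoef_zero_eq_prod_tailFactor, remCoef, mul_assoc,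
    ← tailFactor_mul_prod _ _ _ (h.lt_plen.le.trans hN)]
  congr 2
  refine Finset.prod_subset (Finset.Icc_subset_Icc_right hN) fun p hp hp' => ?_
  have hip : i + 1 ≤ p := (Finset.mem_Icc.1 hp).1
  refine div_mul_tailFactor_eq_one_of_plen_le hgen hip (le_of_not_ge fun hle => hp' ?_)
  exact Finset.mem_Icc.2 ⟨hip, hle⟩

lemma posMap_single (c : ℂ) :
    posMap h1 h2 (Finsupp.single lam c) = Finsupp.single (rowPos h1 h2 lam) c := by
  simp [posMap]

lemma eOp_single (j : ℕ) (c : ℂ) :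
    eOp h1 h2 u j (Finsupp.single lam c) = c • evec h1 h2 u j lam := by
  simp [eOp]

lemma fOp_single (j : ℕ) (c : ℂ) :
    fOp h1 h2 u j (Finsupp.single lam c) = c • fvec h1 h2 u j lam := by
  simp [fOp]

lemma evec_eq_sum_range (j : ℕ) {N : ℕ} (hN : plen lam ≤ N) :
    evec h1 h2 u j lam = ∑ i ∈ Finset.range (N + 1),
      if h : Addable lam i then Finsupp.single (addBox lam i h) (ecoef h1 h2 u j lam i) else 0 := by
  refine Finset.sum_subset (Finset.range_mono (Nat.succ_le_succ hN)) fun i _ hi => ?_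
  exact dif_neg fun h => hi (Finset.mem_range_succ_iff.2 h.le_plen)

lemma fvec_eq_sum_range (j : ℕ) {N : ℕ} (hN : plen lam ≤ N) :
    fvec h1 h2 u j lam = ∑ k ∈ Finset.range (N + 1),
      if h : Removable lam k then Finsupp.single (remBox lam k h) (fcoef h1 h2 u j lam k)
      else 0 := by
  refine Finset.sum_subset (Finset.range_mono (hN.trans (Nat.le_succ N))) fun k _ hk => ?_
  exact dif_neg fun h => hk (Finset.mem_range.2 h.lt_plen)

lemma posMap_evec (j : ℕ) {N : ℕ} (hN : plen lam ≤ N) :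
    posMap h1 h2 (evec h1 h2 u j lam) = ∑ i ∈ Finset.range (N + 1),
      Finsupp.single (rowPos h1 h2 lam + Pi.single i h1)
        (addCoef h1 h2 u j (rowPos h1 h2 lam) i) := by
  rw [evec_eq_sum_range u j hN, map_sum]
  refine Finset.sum_congr rfl fun i _ => ?_
  split_ifs with h
  · rw [posMap_single, rowPos_addBox, ecoef_eq_addCoef]
  · rw [addCoef_eq_zero_of_not_addable u j h, Finsupp.single_zero, map_zero]

lemma posMap_fvec_zero (hgen : LinearIndependent ℤ ![h1, h2]) {N : ℕ} (hN : plen lam ≤ N) :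
    posMap h1 h2 (fvec h1 h2 u 0 lam) = ∑ k ∈ Finset.range (N + 1),
      Finsupp.single (rowPos h1 h2 lam + Pi.single k (-h1))
        (remCoef h1 h2 N (rowPos h1 h2 lam) k) := by
  rw [fvec_eq_sum_range u 0 hN, map_sum]
  refine Finset.sum_congr rfl fun k hk => ?_
  split_ifs with h
  · rw [posMap_single, rowPos_remBox, fcoef_zero_eq_remCoef u hgen hN h]
  · rw [remCoef_eq_zero_of_not_removable (Finset.mem_range_succ_iff.1 hk) h, Finsupp.single_zero,
      map_zero]

lemma posMap_eOp_fOp_zero_single (hgen : LinearIndependent ℤ ![h1, h2]) (j : ℕ) {N : ℕ}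
    (hN : plen lam ≤ N) :
    posMap h1 h2 (eOp h1 h2 u j (fOp h1 h2 u 0 (Finsupp.single lam 1))) =
      ∑ k ∈ Finset.range (N + 1), ∑ i ∈ Finset.range (N + 1),
        Finsupp.single (rowPos h1 h2 lam + Pi.single k (-h1) + Pi.single i h1)
          (remCoef h1 h2 N (rowPos h1 h2 lam) k *
            addCoef h1 h2 u j (rowPos h1 h2 lam + Pi.single k (-h1)) i) := by
  rw [fOp_single, one_smul, fvec_eq_sum_range u 0 hN, map_sum, map_sum]
  refine Finset.sum_congr rfl fun k hk => ?_
  split_ifs with h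
  · rw [eOp_single, map_smul, posMap_evec u j ((plen_remBox_le h).trans hN), rowPos_remBox,
      fcoef_zero_eq_remCoef u hgen hN h, Finset.smul_sum]
    simp only [Finsupp.smul_single, smul_eq_mul]
  · simp [remCoef_eq_zero_of_not_removable (Finset.mem_range_succ_iff.1 hk) h]

lemma posMap_fOp_zero_eOp_single (hgen : LinearIndependent ℤ ![h1, h2]) (j : ℕ) {N : ℕ}
    (hN : plen lam + 1 ≤ N) :
    posMap h1 h2 (fOp h1 h2 u 0 (eOp h1 h2 u j (Finsupp.single lam 1))) =
      ∑ i ∈ Finset.range (N + 1), ∑ k ∈ Finset.range (N + 1),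
        Finsupp.single (rowPos h1 h2 lam + Pi.single i h1 + Pi.single k (-h1))
          (addCoef h1 h2 u j (rowPos h1 h2 lam) i *
            remCoef h1 h2 N (rowPos h1 h2 lam + Pi.single i h1) k) := by
  rw [eOp_single, one_smul, evec_eq_sum_range u j ((Nat.le_succ _).trans hN), map_sum, map_sum]
  refine Finset.sum_congr rfl fun i _ => ?_
  split_ifs with h
  · rw [fOp_single, map_smul, posMap_fvec_zero u hgen ((plen_addBox_le h).trans hN),
      rowPos_addBox, ecoef_eq_addCoef, Finset.smul_sum]
    simp only [Finsupp.smul_single, smul_eq_mul]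
  · simp [addCoef_eq_zero_of_not_addable u j h]

lemma psiOp_single (hgen : LinearIndependent ℤ ![h1, h2]) (j : ℕ) {N : ℕ}
    (hN : plen lam + 1 ≤ N) :
    psiOp h1 h2 u j (Finsupp.single lam 1) = Finsupp.single lam
      (∑ k ∈ Finset.range (N + 1),
        (remCoef h1 h2 N (rowPos h1 h2 lam) k *
            addCoef h1 h2 u j (rowPos h1 h2 lam + Pi.single k (-h1)) k -
          addCoef h1 h2 u j (rowPos h1 h2 lam) k *
            remCoef h1 h2 N (rowPos h1 h2 lam + Pi.single k h1) k)) := by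
  have hh1 : h1 ≠ 0 := hgen.ne_zero 0
  have hcancel (k : ℕ) : rowPos h1 h2 lam + Pi.single k (-h1) + Pi.single k h1 =
      rowPos h1 h2 lam := by
    rw [add_assoc, ← Pi.single_add, neg_add_cancel, Pi.single_zero, add_zero]
  have hcancel' (k : ℕ) : rowPos h1 h2 lam + Pi.single k h1 + Pi.single k (-h1) =
      rowPos h1 h2 lam := (add_right_comm _ _ _).trans (hcancel k)
  apply Finsupp.mapDomain_injective (rowPos_injective hh1)
  change posMap h1 h2 (eOp h1 h2 u j (fOp h1 h2 u 0 (Finsupp.single lam 1)) -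
    fOp h1 h2 u 0 (eOp h1 h2 u j (Finsupp.single lam 1))) = posMap h1 h2 (Finsupp.single lam _)
  rw [map_sub, posMap_eOp_fOp_zero_single u hgen j ((Nat.le_succ _).trans hN),
    posMap_fOp_zero_eOp_single u hgen j hN, posMap_single, Finsupp.single_finsetSum]
  nth_rw 2 [Finset.sum_comm]
  rw [← Finset.sum_sub_distrib]
  refine Finset.sum_congr rfl fun k hk => ?_
  rw [← Finset.sum_sub_distrib, Finset.sum_eq_single_of_mem k hk fun i hi hik => ?_]
  · rw [hcancel, hcancel', Finsupp.single_sub]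
  · rw [remCoef_mul_addCoef_comm h1 h2 u j (Finset.mem_range_succ_iff.1 hi) hik,
      add_right_comm, sub_self]

lemma linearIndependent_int_pair
    (hgen : ∀ a b : ℤ, ¬(a = 0 ∧ b = 0) → (a : ℂ) * h1 + (b : ℂ) * h2 ≠ 0) :
    LinearIndependent ℤ ![h1, h2] :=
  LinearIndependent.pair_iff.2 fun a b hab => by
    by_contra hne
    exact hgen a b hne (by simpa using hab)

end FockSpace

end Fock

theorem fock_e1_f0_commutator_general (h1 h2 u : ℂ)
    (hgen : ∀ a b : ℤ, ¬(a = 0 ∧ b = 0) → (a : ℂ) * h1 + (b : ℂ) * h2 ≠ 0) :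
    psiOp h1 h2 u 1 = -(u / (h1 * h2)) • 1 := by
  have hind := linearIndependent_int_pair hgen
  have hh2 : h2 ≠ 0 := hind.ne_zero 1
  have hadd : h1 + h2 ≠ 0 := by simpa using hgen 1 1
  refine Finsupp.lhom_ext' fun lam => LinearMap.ext_ring ?_
  change psiOp h1 h2 u 1 (Finsupp.single lam 1) = -(u / (h1 * h2)) • Finsupp.single lam 1
  have hlast : rowPos h1 h2 lam (plen lam + 1 + 1) = ((plen lam + 1 : ℕ) + 1) * h2 := by
    simp [rowPos, apply_eq_zero_of_plen_le (show plen lam ≤ plen lam + 1 + 1 by omega)]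
  rw [psiOp_single u hind 1 le_rfl, sum_remCoef_mul_addCoef_one_sub u hh2 hadd
    (pole_rowPos_injective lam hind) (rowPos_succ_of_plen_le (Nat.le_succ _)), hlast,
    add_sub_cancel_left, Finsupp.smul_single, smul_eq_mul, mul_one]

/-- For the Fock module of the affine Yangian of `gl_1` (with `u = 0`
and generic `h1, h2`), the operator `[e_1, f_0]` is zero. -/
theorem fock_e1_f0_commutator (h1 h2 : ℂ)
    (hgen : ∀ a b : ℤ, ¬(a = 0 ∧ b = 0) → (a : ℂ) * h1 + (b : ℂ) * h2 ≠ 0) :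
    eOp h1 h2 0 1 * fOp h1 h2 0 0 - fOp h1 h2 0 0 * eOp h1 h2 0 1 = 0 := by
  simpa [psiOp] using fock_e1_f0_commutator_general h1 h2 0 hgen

end
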